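/- arXiv:2403.11676 — 3 statements merged into one kernel-verified Lean document; each statement's English description precedes it below -/
import Mathlib

section
/- Let p be a prime, A a δ-ring, and T_1,…,T_d ∈ A. Let B = A[X_{i,n} : 1 ≤ i ≤ d, n ∈ ℕ] be the polynomial ring over A equipped with a δ-structure extending that of A and satisfying δ(X_{i,n}) = X_{i,n+1}, and let D = B/K, where K is the ideal of B generated by all elements δ^n(p·X_{i,0} − T_i) for 1 ≤ i ≤ d and n ∈ ℕ. If A is p-torsion free and the images of T_1,…,T_d in A/pA form a regular sequence, then D is p-torsion free. -/
/-- A δ-structure on a commutative ring `A`, relative to a prime `p`. -/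
structure DeltaStructure (p : ℕ) (A : Type*) [CommRing A] where
  δ : A → A
  delta_zero : δ 0 = 0
  delta_one : δ 1 = 0
  delta_add : ∀ x y : A, δ (x + y) =
    δ x + δ y - ∑ i ∈ Finset.Ioo 0 p, ((p.choose i / p : ℕ) : A) * x ^ i * y ^ (p - i)
  delta_mul : ∀ x y : A, δ (x * y) =
    δ x * y ^ p + x ^ p * δ y + (p : A) * δ x * δ y

open MvPolynomial

namespace DeltaEnv

/-- Multiplication by `p` on the defining binomial sum. -/
lemma p_mul_delta_add {p : ℕ} (hp : p.Prime) {R : Type*} [CommRing R] (D : DeltaStructure p R)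
    (x y : R) : (x + y) ^ p + (p : R) * D.δ (x + y) =
      (x ^ p + p * D.δ x) + (y ^ p + p * D.δ y) := by
  have h1 : (x + y) ^ p = x ^ p + y ^ p +
      ∑ i ∈ Finset.Ioo 0 p, (p.choose i : R) * x ^ i * y ^ (p - i) := by
    rw [add_pow, Finset.sum_range_succ, Finset.range_eq_Ico,
      Finset.sum_eq_sum_Ico_succ_bot hp.pos]
    have : Finset.Ioo 0 p = Finset.Ico (0 + 1) p := by
      ext i; simp [Finset.mem_Ioo, Finset.mem_Ico, Nat.succ_le_iff]
    rw [this]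
    simp only [pow_zero, Nat.sub_zero, Nat.choose_zero_right, Nat.cast_one, Nat.sub_self,
      Nat.choose_self, one_mul, mul_one]
    have : ∑ i ∈ Finset.Ico (0 + 1) p, x ^ i * y ^ (p - i) * (p.choose i : R) =
        ∑ i ∈ Finset.Ico (0 + 1) p, (p.choose i : R) * x ^ i * y ^ (p - i) :=
      Finset.sum_congr rfl fun i _ => by ring
    rw [this]; ring
  have h2 : (p : R) * ∑ i ∈ Finset.Ioo 0 p, ((p.choose i / p : ℕ) : R) * x ^ i * y ^ (p - i) =
      ∑ i ∈ Finset.Ioo 0 p, (p.choose i : R) * x ^ i * y ^ (p - i) := by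
    rw [Finset.mul_sum]
    refine Finset.sum_congr rfl fun i hi => ?_
    rw [Finset.mem_Ioo] at hi
    have : p * (p.choose i / p) = p.choose i :=
      Nat.mul_div_cancel' (hp.dvd_choose_self hi.1.ne' hi.2)
    calc _ = ((p * (p.choose i / p) : ℕ) : R) * x ^ i * y ^ (p - i) := by push_cast; ring
      _ = _ := by rw [this]
  rw [D.delta_add, h1, mul_sub, h2]; ring

lemma frob_nat {p : ℕ} (hp : p.Prime) {R : Type*} [CommRing R] (D : DeltaStructure p R)
    (n : ℕ) : (n : R) ^ p + (p : R) * D.δ n = n := by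
  induction n with
  | zero => simp [D.delta_zero, hp.ne_zero]
  | succ n ih => push_cast; rw [p_mul_delta_add hp, ih, D.delta_one]; simp

lemma delta_p {p : ℕ} (hp : p.Prime) {R : Type*} [CommRing R] (D : DeltaStructure p R)
    (htf : ∀ x : R, (p : R) * x = 0 → x = 0) :
    D.δ (p : R) = 1 - p * p ^ (p - 2) := by
  have h := frob_nat hp D p
  rw [← sub_eq_zero]
  apply htf
  have : (p : R) ^ p = p * (p * p ^ (p - 2)) := by
    rw [← pow_succ', ← pow_succ']; congr 1; have := hp.two_le; omega
  rw [this] at h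
  linear_combination h

section
variable {p : ℕ} {A : Type*} [CommRing A] {d : ℕ}

/-- Polynomials in the variables `X (i, m)`, `m < n`. -/
noncomputable abbrev supp (A : Type*) [CommRing A] {d : ℕ} (i : Fin d) (n : ℕ) :
    Subalgebra A (MvPolynomial (Fin d × ℕ) A) :=
  MvPolynomial.supported A {s : Fin d × ℕ | s.1 = i ∧ s.2 < n}

lemma supp_le (i : Fin d) (n : ℕ) : supp A i n ≤ supp A i (n + 1) :=
  MvPolynomial.supported_mono fun s hs => ⟨hs.1, by have := hs.2; omega⟩

lemma X_mem_supp (i : Fin d) (n : ℕ) :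
    (X (i, n) : MvPolynomial (Fin d × ℕ) A) ∈ supp A i (n + 1) :=
  Algebra.subset_adjoin ⟨(i, n), ⟨rfl, Nat.lt_succ_self n⟩, rfl⟩

lemma delta_supp (DA : DeltaStructure p A)
    (DB : DeltaStructure p (MvPolynomial (Fin d × ℕ) A))
    (hBC : ∀ a : A, DB.δ (C a) = C (DA.δ a))
    (hBX : ∀ (i : Fin d) (n : ℕ), DB.δ (X (i, n)) = X (i, n + 1))
    (i : Fin d) (n : ℕ) (f : MvPolynomial (Fin d × ℕ) A) (hf : f ∈ supp A i n) :
    ∃ g ∈ supp A i n, ∃ h ∈ supp A i n, ∃ k ∈ supp A i (n + 1),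
      DB.δ f = g + h * X (i, n) + (p : MvPolynomial (Fin d × ℕ) A) * k := by
  have hle := supp_le (A := A) i n
  have hX := X_mem_supp (A := A) i n
  have hpm : (p : MvPolynomial (Fin d × ℕ) A) ∈ supp A i (n + 1) := natCast_mem _ p
  induction hf using Algebra.adjoin_induction with
  | mem x hx =>
    obtain ⟨⟨j, m⟩, ⟨hj, hm⟩, rfl⟩ := hx
    simp only at hj hm
    subst hj
    rw [hBX]
    rcases Nat.lt_or_ge (m + 1) n with h | h
    · exact ⟨X (j, m + 1), Algebra.subset_adjoin ⟨(j, m + 1), ⟨rfl, h⟩, rfl⟩, 0, zero_mem _, 0,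
        zero_mem _, by ring⟩
    · obtain rfl : n = m + 1 := by omega
      exact ⟨0, zero_mem _, 1, one_mem _, 0, zero_mem _, by ring⟩
  | algebraMap a =>
    exact ⟨C (DA.δ a), Subalgebra.algebraMap_mem _ _, 0, zero_mem _, 0, zero_mem _, by
      rw [MvPolynomial.algebraMap_eq, hBC]; ring⟩
  | add x y hx hy ihx ihy =>
    obtain ⟨g, hg, h, hh, k, hk, e⟩ := ihx
    obtain ⟨g', hg', h', hh', k', hk', e'⟩ := ihy
    refine ⟨g + g' - ∑ i ∈ Finset.Ioo 0 p,
        ((p.choose i / p : ℕ) : MvPolynomial (Fin d × ℕ) A) * x ^ i * y ^ (p - i), ?_,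
      h + h', add_mem hh hh', k + k', add_mem hk hk', ?_⟩
    · exact sub_mem (add_mem hg hg') (sum_mem fun j _ =>
        mul_mem (mul_mem (natCast_mem _ _) (pow_mem hx _)) (pow_mem hy _))
    · rw [DB.delta_add, e, e']; ring
  | mul x y hx hy ihx ihy =>
    obtain ⟨g, hg, h, hh, k, hk, e⟩ := ihx
    obtain ⟨g', hg', h', hh', k', hk', e'⟩ := ihy
    refine ⟨g * y ^ p + x ^ p * g', add_mem (mul_mem hg (pow_mem hy _)) (mul_mem (pow_mem hx _) hg'),
      h * y ^ p + x ^ p * h', add_mem (mul_mem hh (pow_mem hy _)) (mul_mem (pow_mem hx _) hh'),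
      k * y ^ p + x ^ p * k' + (g + h * X (i, n) + (p : MvPolynomial (Fin d × ℕ) A) * k) * (g' + h' * X (i, n) + (p : MvPolynomial (Fin d × ℕ) A) * k'), ?_, ?_⟩
    · refine add_mem (add_mem (mul_mem hk (pow_mem (hle hy) _)) (mul_mem (pow_mem (hle hx) _) hk')) ?_
      exact mul_mem (add_mem (add_mem (hle hg) (mul_mem (hle hh) hX)) (mul_mem hpm hk))
        (add_mem (add_mem (hle hg') (mul_mem (hle hh') hX)) (mul_mem hpm hk'))
    · rw [DB.delta_mul, e, e']; ring

lemma delta_step (hp : p.Prime) (DA : DeltaStructure p A)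
    (DB : DeltaStructure p (MvPolynomial (Fin d × ℕ) A))
    (hBC : ∀ a : A, DB.δ (C a) = C (DA.δ a))
    (hBX : ∀ (i : Fin d) (n : ℕ), DB.δ (X (i, n)) = X (i, n + 1))
    (htf : ∀ x : MvPolynomial (Fin d × ℕ) A, (p : MvPolynomial (Fin d × ℕ) A) * x = 0 → x = 0)
    (i : Fin d) (n : ℕ) (f : MvPolynomial (Fin d × ℕ) A) (hf : f ∈ supp A i n) :
    ∃ g ∈ supp A i n, ∃ h ∈ supp A i n, ∃ k ∈ supp A i (n + 1),
      DB.δ ((p : MvPolynomial (Fin d × ℕ) A) * X (i, n) + f) = (p : MvPolynomial (Fin d × ℕ) A) * X (i, n + 1) + (X (i, n) ^ p + h * X (i, n) + g + (p : MvPolynomial (Fin d × ℕ) A) * k) := by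
  obtain ⟨g, hg, h, hh, k, hk, e⟩ := delta_supp DA DB hBC hBX i n f hf
  have hle := supp_le (A := A) i n
  have hX := X_mem_supp (A := A) i n
  have hpm : (p : MvPolynomial (Fin d × ℕ) A) ∈ supp A i (n + 1) := natCast_mem _ p
  have hs : ∑ j ∈ Finset.Ioo 0 p, ((p.choose j / p : ℕ) : MvPolynomial (Fin d × ℕ) A) *
      ((p : MvPolynomial (Fin d × ℕ) A) * X (i, n)) ^ j * f ^ (p - j) = (p : MvPolynomial (Fin d × ℕ) A) * ∑ j ∈ Finset.Ioo 0 p,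
        ((p.choose j / p : ℕ) : MvPolynomial (Fin d × ℕ) A) *
      (X (i, n) * ((p : MvPolynomial (Fin d × ℕ) A) * X (i, n)) ^ (j - 1)) * f ^ (p - j) := by
    rw [Finset.mul_sum]
    refine Finset.sum_congr rfl fun j hj => ?_
    rw [Finset.mem_Ioo] at hj
    obtain ⟨j, rfl⟩ : ∃ j', j = j' + 1 := ⟨j - 1, by omega⟩
    rw [Nat.add_sub_cancel, pow_succ]; ring
  refine ⟨g, hg, h, hh, k - (p : MvPolynomial (Fin d × ℕ) A) ^ (p - 2) * X (i, n) ^ p - ∑ j ∈ Finset.Ioo 0 p,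
        ((p.choose j / p : ℕ) : MvPolynomial (Fin d × ℕ) A) *
      (X (i, n) * ((p : MvPolynomial (Fin d × ℕ) A) * X (i, n)) ^ (j - 1)) * f ^ (p - j), ?_, ?_⟩
  · refine sub_mem (sub_mem hk (mul_mem (pow_mem hpm _) (pow_mem hX _))) (sum_mem fun j _ => ?_)
    exact mul_mem (mul_mem (natCast_mem _ _) (mul_mem hX (pow_mem (mul_mem hpm hX) _)))
      (pow_mem (hle hf) _)
  · have hpp : (p : MvPolynomial (Fin d × ℕ) A) ^ p = (p : MvPolynomial (Fin d × ℕ) A) * ((p : MvPolynomial (Fin d × ℕ) A) * (p : MvPolynomial (Fin d × ℕ) A) ^ (p - 2)) := by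
      rw [← pow_succ', ← pow_succ']; congr 1; have := hp.two_le; omega
    rw [DB.delta_add, hs, e, DB.delta_mul, delta_p hp DB htf, hBX, hpp]
    ring

/-- Shape of the iterates. -/
lemma delta_iter (hp : p.Prime) (DA : DeltaStructure p A)
    (DB : DeltaStructure p (MvPolynomial (Fin d × ℕ) A))
    (hBC : ∀ a : A, DB.δ (C a) = C (DA.δ a))
    (hBX : ∀ (i : Fin d) (n : ℕ), DB.δ (X (i, n)) = X (i, n + 1))
    (htf : ∀ x : MvPolynomial (Fin d × ℕ) A, (p : MvPolynomial (Fin d × ℕ) A) * x = 0 → x = 0)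
    (i : Fin d) (t : A) (n : ℕ) : ∃ f ∈ supp A i n,
      DB.δ^[n] ((p : MvPolynomial (Fin d × ℕ) A) * X (i, 0) - C t) = (p : MvPolynomial (Fin d × ℕ) A) * X (i, n) + f := by
  induction n with
  | zero => exact ⟨- C t, neg_mem (Subalgebra.algebraMap_mem _ _), by simp [sub_eq_add_neg]⟩
  | succ n ih =>
    obtain ⟨f, hf, e⟩ := ih
    obtain ⟨g, hg, h, hh, k, hk, e'⟩ := delta_step hp DA DB hBC hBX htf i n f hf
    have hle := supp_le (A := A) i n
    have hX := X_mem_supp (A := A) i n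
    refine ⟨_, ?_, by rw [Function.iterate_succ_apply', e, e']⟩
    exact add_mem (add_mem (add_mem (pow_mem hX _) (mul_mem (hle hh) hX)) (hle hg))
      (mul_mem (natCast_mem _ p) hk)

end

/-- A polynomial monic in a variable not occurring in the ideal is a nonzerodivisor. -/
lemma monic_step {σ A : Type*} [CommRing A] (p : ℕ) (hp : 2 ≤ p) (t : σ)
    (G : Set (MvPolynomial σ A)) (J : Ideal (MvPolynomial σ A))
    (hJ : J = Ideal.span G ⊔ Ideal.span {(p : MvPolynomial σ A)})
    (hG : ∀ y ∈ G, ∃ s ∈ MvPolynomial.supported A {u | u ≠ t}, ∃ k, y = s + p * k)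
    (g h k b : MvPolynomial σ A)
    (hg : g ∈ MvPolynomial.supported A {u | u ≠ t})
    (hh : h ∈ MvPolynomial.supported A {u | u ≠ t})
    (hb : (X t ^ p + h * X t + g + (p : MvPolynomial σ A) * k) * b ∈ J) : b ∈ J := by
  classical
  rcases subsingleton_or_nontrivial (MvPolynomial σ A ⧸ J) with hsub | hnt
  · rw [Ideal.Quotient.subsingleton_iff] at hsub
    rw [hsub]; trivial
  let π := Ideal.Quotient.mk J
  have hpJ : (p : MvPolynomial σ A) ∈ J := by
    rw [hJ]; exact Ideal.mem_sup_right (Ideal.mem_span_singleton_self _)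
  have hp0 : (p : MvPolynomial σ A ⧸ J) = 0 := by
    have := Ideal.Quotient.eq_zero_iff_mem.2 hpJ
    simpa using this
  let Ψ : MvPolynomial σ A →+* Polynomial (MvPolynomial σ A ⧸ J) :=
    eval₂Hom ((Polynomial.C.comp π).comp C)
      (fun u => if u = t then Polynomial.X else Polynomial.C (π (X u)))
  have hpΨ : (p : Polynomial (MvPolynomial σ A ⧸ J)) = 0 := by
    rw [← map_natCast Polynomial.C p, hp0, map_zero]
  have hΨt : Ψ (X t) = Polynomial.X := by simp [Ψ]
  have hΨs : ∀ s ∈ MvPolynomial.supported A {u | u ≠ t}, Ψ s = Polynomial.C (π s) := by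
    intro s hs
    induction hs using Algebra.adjoin_induction with
    | mem x hx =>
      obtain ⟨u, hu, rfl⟩ := hx
      have hu' : u ≠ t := hu
      simp [Ψ, hu']
    | algebraMap a => simp [Ψ, MvPolynomial.algebraMap_eq]
    | add x y _ _ hx hy => simp only [map_add, hx, hy]
    | mul x y _ _ hx hy => simp only [map_mul, hx, hy]
  have hΨJ : ∀ y ∈ J, Ψ y = 0 := by
    have : J ≤ RingHom.ker Ψ := by
      conv_lhs => rw [hJ]
      refine sup_le (Ideal.span_le.2 fun y hy => ?_) (Ideal.span_le.2 ?_)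
      · obtain ⟨s, hs, k, e⟩ := hG y hy
        have hyJ : π y = 0 := Ideal.Quotient.eq_zero_iff_mem.2
          (by rw [hJ]; exact Ideal.mem_sup_left (Ideal.subset_span hy))
        have : π s = 0 := by
          rw [e, map_add, map_mul, map_natCast, hp0, zero_mul, add_zero] at hyJ
          exact hyJ
        show Ψ y = 0
        rw [e, map_add, map_mul, map_natCast, hpΨ, hΨs s hs, this]; simp
      · rintro _ rfl
        show Ψ _ = 0
        rw [map_natCast, hpΨ]
    exact fun y hy => this hy
  have hev : (Polynomial.evalRingHom (π (X t))).comp Ψ = π := by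
    apply MvPolynomial.ringHom_ext
    · intro a; simp [Ψ]
    · intro u
      by_cases hu : u = t
      · subst hu; simp [Ψ]
      · simp [Ψ, hu]
  have h0 := hΨJ _ hb
  rw [map_mul] at h0
  have hm : (Ψ (X t ^ p + h * X t + g + (p : MvPolynomial σ A) * k)).Monic := by
    rw [map_add, map_mul _ (p : MvPolynomial σ A), map_natCast, hpΨ, zero_mul, add_zero,
      map_add, map_add, map_pow, map_mul, hΨt, hΨs _ hg, hΨs _ hh, add_assoc]
    apply Polynomial.monic_X_pow_add
    refine lt_of_le_of_lt Polynomial.degree_linear_le ?_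
    exact_mod_cast (by omega : 1 < p)
  have hb0 : Ψ b = 0 := by
    have := hm.mul_right_eq_zero_iff.1 h0
    exact this
  have : π b = 0 := by
    rw [← hev, RingHom.comp_apply, hb0, map_zero]
  exact Ideal.Quotient.eq_zero_iff_mem.1 this

/-- Abstract induction: `p` stays regular modulo a sequence regular modulo `p`. -/
lemma torsion_free_of_seq {R : Type*} [CommRing R] (q : R) (hq : ∀ x : R, q * x = 0 → x = 0)
    (Y : ℕ → R)
    (hY : ∀ k b, Y k * b ∈ Ideal.span (Y '' Set.Iio k) ⊔ Ideal.span {q} →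
      b ∈ Ideal.span (Y '' Set.Iio k) ⊔ Ideal.span {q}) (x : R)
    (hx : q * x ∈ Ideal.span (Set.range Y)) : x ∈ Ideal.span (Set.range Y) := by
  have key : ∀ k x, q * x ∈ Ideal.span (Y '' Set.Iio k) → x ∈ Ideal.span (Y '' Set.Iio k) := by
    intro k
    induction k with
    | zero =>
      intro x hx
      have : Set.Iio 0 = (∅ : Set ℕ) := by ext; simp
      rw [this, Set.image_empty, Ideal.span_empty, Ideal.mem_bot] at hx ⊢
      exact hq x hx
    | succ k ih =>
      intro x hx
      have hs : Set.Iio (k + 1) = insert k (Set.Iio k) := by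
        ext j; simp only [Set.mem_Iio, Set.mem_insert_iff]; omega
      rw [hs, Set.image_insert_eq, Ideal.mem_span_insert] at hx ⊢
      obtain ⟨a, z, hz, e⟩ := hx
      have ha := hY k a (by
        have : Y k * a = - z + q * x := by rw [e]; ring
        rw [this]
        exact add_mem (Ideal.mem_sup_left (neg_mem hz))
          (Ideal.mem_sup_right (Ideal.mul_mem_right _ _ (Ideal.mem_span_singleton_self _))))
      obtain ⟨w, hw, v, hv, e'⟩ := Submodule.mem_sup.1 ha
      obtain ⟨c, rfl⟩ := Ideal.mem_span_singleton'.1 hv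
      refine ⟨c, x - c * Y k, ih _ ?_, by ring⟩
      have : q * (x - c * Y k) = w * Y k + z := by
        rw [mul_sub, e, ← e']; ring
      rw [this]
      exact add_mem (Ideal.mul_mem_right _ _ hw) hz
  have hU : Ideal.span (Set.range Y) = ⨆ k, Ideal.span (Y '' Set.Iio k) := by
    rw [← Ideal.span_iUnion]
    congr 1
    ext y
    simp only [Set.mem_range, Set.mem_iUnion, Set.mem_image, Set.mem_Iio]
    exact ⟨fun ⟨k, hk⟩ => ⟨k + 1, k, Nat.lt_succ_self k, hk⟩, fun ⟨_, k, _, hk⟩ => ⟨k, hk⟩⟩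
  have hdir : Directed (· ≤ ·) fun k => Ideal.span (Y '' Set.Iio k) :=
    Monotone.directed_le fun a b hab => Ideal.span_mono (Set.image_mono (Set.Iio_subset_Iio hab))
  rw [hU, Submodule.mem_iSup_of_directed _ hdir] at hx ⊢
  obtain ⟨k, hk⟩ := hx
  exact ⟨k, key k x hk⟩

lemma reg_step {A : Type*} [CommRing A] (q : A) {d : ℕ} (T : Fin d → A)
    (hreg : RingTheory.Sequence.IsRegular (A ⧸ Ideal.span {q})
      (List.ofFn fun i : Fin d => Ideal.Quotient.mk (Ideal.span {q}) (T i)))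
    (i : Fin d) (a : A) (ha : T i * a ∈ Ideal.span (T '' Set.Iio i) ⊔ Ideal.span {q}) :
    a ∈ Ideal.span (T '' Set.Iio i) ⊔ Ideal.span {q} := by
  have h := hreg.toIsWeaklyRegular.regular_mod_prev i (by simp)
  set π := Ideal.Quotient.mk (Ideal.span {q}) with hπ
  have hL : Ideal.ofList ((List.ofFn fun i : Fin d => π (T i)).take i) =
      (Ideal.span (T '' Set.Iio i)).map π := by
    rw [Ideal.map_span, Ideal.ofList]
    congr 1
    ext y
    simp only [Set.mem_ofPred_eq, Set.mem_image, Set.mem_Iio, List.mem_take_iff_getElem,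
      List.getElem_ofFn, List.length_ofFn]
    constructor
    · rintro ⟨j, hj, rfl⟩
      exact ⟨_, ⟨⟨j, by omega⟩, by rw [Fin.lt_def]; simp; omega, rfl⟩, rfl⟩
    · rintro ⟨_, ⟨j, hj, rfl⟩, rfl⟩
      exact ⟨j, by have := j.2; rw [Fin.lt_def] at hj; omega, rfl⟩
  have hmem : ∀ x, x ∈ Ideal.span (T '' Set.Iio i) ⊔ Ideal.span {q} ↔
      π x ∈ (Ideal.span (T '' Set.Iio i)).map π := by
    intro x
    rw [← Ideal.mem_comap, Ideal.comap_map_of_surjective' _ Ideal.Quotient.mk_surjective,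
      Ideal.mk_ker]
  rw [hL, List.getElem_ofFn] at h
  have hm : ((Ideal.span (T '' Set.Iio i)).map π • ⊤ : Submodule (A ⧸ Ideal.span {q}) (A ⧸ Ideal.span {q})) = (Ideal.span (T '' Set.Iio i)).map π := by
    simp
  rw [hm] at h
  rw [hmem] at ha ⊢
  rw [← Ideal.Quotient.eq_zero_iff_mem]
  apply h
  simp only [smul_zero]
  rw [← Ideal.Quotient.eq_zero_iff_mem, map_mul] at ha
  exact ha

lemma const_step {A : Type*} [CommRing A] (q : A) {d : ℕ} (T : Fin d → A)
    (hreg : RingTheory.Sequence.IsRegular (A ⧸ Ideal.span {q})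
      (List.ofFn fun i : Fin d => Ideal.Quotient.mk (Ideal.span {q}) (T i)))
    (i : Fin d) {σ : Type*} (b : MvPolynomial σ A)
    (hb : C (T i) * b ∈ (Ideal.span (T '' Set.Iio i) ⊔ Ideal.span {q}).map (C (σ := σ))) :
    b ∈ (Ideal.span (T '' Set.Iio i) ⊔ Ideal.span {q}).map (C (σ := σ)) := by
  rw [MvPolynomial.mem_map_C_iff] at *
  intro m
  apply reg_step q T hreg
  have := hb m
  rwa [coeff_C_mul] at this

end DeltaEnv

/-- If `A` is `p`-torsion free and the images of `T_1, …, T_d` in `A/pA` form a regular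
sequence, then the quotient `D = B/K` of `B = A[X_{i,n}]` (with `δ(X_{i,n}) = X_{i,n+1}`)
by the δ-ideal `K` generated by the elements `p·X_{i,0} − T_i` is `p`-torsion free. -/
theorem delta_envelope_p_torsion_free (p : ℕ) (hp : p.Prime)
    (A : Type*) [CommRing A] (DA : DeltaStructure p A)
    (d : ℕ) (T : Fin d → A)
    (DB : DeltaStructure p (MvPolynomial (Fin d × ℕ) A))
    (hBC : ∀ a : A, DB.δ (C a) = C (DA.δ a))
    (hBX : ∀ (i : Fin d) (n : ℕ), DB.δ (X (i, n)) = X (i, n + 1))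
    (K : Ideal (MvPolynomial (Fin d × ℕ) A))
    (hK : K = Ideal.span {y : MvPolynomial (Fin d × ℕ) A | ∃ (i : Fin d) (n : ℕ),
      y = DB.δ^[n] ((p : MvPolynomial (Fin d × ℕ) A) * X (i, 0) - C (T i))})
    (htf : ∀ x : A, (p : A) * x = 0 → x = 0)
    (hreg : RingTheory.Sequence.IsRegular (A ⧸ Ideal.span {(p : A)})
      (List.ofFn fun i : Fin d => Ideal.Quotient.mk (Ideal.span {(p : A)}) (T i))) :
    ∀ x : MvPolynomial (Fin d × ℕ) A ⧸ K,
      (p : MvPolynomial (Fin d × ℕ) A ⧸ K) * x = 0 → x = 0 := by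
  subst hK
  have htfB : ∀ x : MvPolynomial (Fin d × ℕ) A,
      (p : MvPolynomial (Fin d × ℕ) A) * x = 0 → x = 0 := by
    intro x hx
    ext m
    apply htf
    have := congrArg (coeff m) hx
    rwa [← map_natCast (C : A →+* MvPolynomial (Fin d × ℕ) A) p, coeff_C_mul] at this
  intro x
  obtain ⟨x, rfl⟩ := Ideal.Quotient.mk_surjective x
  rw [← map_natCast (Ideal.Quotient.mk _) p, ← map_mul, Ideal.Quotient.eq_zero_iff_mem,
    Ideal.Quotient.eq_zero_iff_mem]
  set Z : Fin d → ℕ → MvPolynomial (Fin d × ℕ) A := fun i n =>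
    DB.δ^[n] ((p : MvPolynomial (Fin d × ℕ) A) * X (i, 0) - C (T i)) with hZ
  rcases Nat.eq_zero_or_pos d with hd | hd
  · subst hd
    have : {y : MvPolynomial (Fin 0 × ℕ) A | ∃ (i : Fin 0) (n : ℕ),
      y = DB.δ^[n] ((p : MvPolynomial (Fin 0 × ℕ) A) * X (i, 0) - C (T i))} = ∅ := by
      ext y; simp
    rw [this, Ideal.span_empty, Ideal.mem_bot, Ideal.mem_bot]
    exact htfB x
  let Y : ℕ → MvPolynomial (Fin d × ℕ) A := fun k => Z ⟨k % d, Nat.mod_lt _ hd⟩ (k / d)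
  have hYr : {y : MvPolynomial (Fin d × ℕ) A | ∃ (i : Fin d) (n : ℕ),
      y = DB.δ^[n] ((p : MvPolynomial (Fin d × ℕ) A) * X (i, 0) - C (T i))} = Set.range Y := by
    ext y
    constructor
    · rintro ⟨i, n, rfl⟩
      refine ⟨i + d * n, ?_⟩
      have h1 : (i + d * n) % d = i := by rw [Nat.add_mul_mod_self_left, Nat.mod_eq_of_lt i.2]
      have h2 : (i + d * n) / d = n := by
        rw [Nat.add_mul_div_left _ _ hd, Nat.div_eq_of_lt i.2, zero_add]
      simp only [Y, h1, h2, hZ]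
    · rintro ⟨k, rfl⟩
      exact ⟨_, _, rfl⟩
  rw [hYr]
  refine DeltaEnv.torsion_free_of_seq _ htfB Y ?_ x
  intro k b hb
  have hshape : ∀ i n, ∃ g ∈ DeltaEnv.supp A i n, ∃ h ∈ DeltaEnv.supp A i n, ∃ k,
      Z i (n + 1) = X (i, n) ^ p + h * X (i, n) + g + (p : MvPolynomial (Fin d × ℕ) A) * k := by
    intro i n
    obtain ⟨f, hf, e⟩ := DeltaEnv.delta_iter hp DA DB hBC hBX htfB i (T i) n
    obtain ⟨g, hg, h, hh, k, hk, e'⟩ := DeltaEnv.delta_step hp DA DB hBC hBX htfB i n f hf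
    refine ⟨g, hg, h, hh, k + X (i, n + 1), ?_⟩
    simp only [hZ]
    rw [Function.iterate_succ_apply', e, e']; ring
  rcases Nat.lt_or_ge k d with hk | hk
  · skip
    have hYk : ∀ j (hj : j < d), Y j = (p : MvPolynomial (Fin d × ℕ) A) * X (⟨j, hj⟩, 0) - C (T ⟨j, hj⟩) := by
      intro j hj
      simp only [Y, hZ, Nat.mod_eq_of_lt hj, Nat.div_eq_of_lt hj, Function.iterate_zero, id]
    have hJ : Ideal.span (Y '' Set.Iio k) ⊔ Ideal.span {(p : MvPolynomial (Fin d × ℕ) A)} =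
        (Ideal.span (T '' Set.Iio ⟨k, hk⟩) ⊔ Ideal.span {(p : A)}).map
          (C (σ := Fin d × ℕ)) := by
      rw [Ideal.map_sup, Ideal.map_span, Ideal.map_span, Set.image_singleton, map_natCast]
      apply le_antisymm
      · refine sup_le (Ideal.span_le.2 ?_) le_sup_right
        rintro _ ⟨j, hj, rfl⟩
        have hj' : j < k := hj
        rw [hYk j (hj'.trans hk)]
        refine sub_mem (Ideal.mem_sup_right (Ideal.mul_mem_right _ _
          (Ideal.mem_span_singleton_self _))) (Ideal.mem_sup_left (Ideal.subset_span ?_))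
        exact ⟨_, ⟨_, Fin.lt_def.2 hj', rfl⟩, rfl⟩
      · refine sup_le (Ideal.span_le.2 ?_) le_sup_right
        rintro _ ⟨_, ⟨j, hj, rfl⟩, rfl⟩
        have hj' : (j : ℕ) < k := hj
        have e : C (T j) = (p : MvPolynomial (Fin d × ℕ) A) * X (j, 0) - Y j := by
          rw [hYk j j.2]; ring
        rw [e]
        exact sub_mem (Ideal.mem_sup_right (Ideal.mul_mem_right _ _
          (Ideal.mem_span_singleton_self _))) (Ideal.mem_sup_left (Ideal.subset_span ⟨j, hj', rfl⟩))
    have e : C (T ⟨k, hk⟩) * b = (p : MvPolynomial (Fin d × ℕ) A) * (X (⟨k, hk⟩, 0) * b) - Y k * b := by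
      rw [hYk k hk]; ring
    have hb' : C (T ⟨k, hk⟩) * b ∈ Ideal.span (Y '' Set.Iio k) ⊔
        Ideal.span {(p : MvPolynomial (Fin d × ℕ) A)} := by
      rw [e]
      exact sub_mem (Ideal.mem_sup_right (Ideal.mul_mem_right _ _
          (Ideal.mem_span_singleton_self _))) hb
    rw [hJ] at hb' ⊢
    exact DeltaEnv.const_step _ T hreg _ b hb'
  · skip
    obtain ⟨n, hn⟩ : ∃ n, k / d = n + 1 :=
      ⟨k / d - 1, by have := Nat.div_pos hk hd; omega⟩
    set i : Fin d := ⟨k % d, Nat.mod_lt _ hd⟩ with hi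
    obtain ⟨g, hg, h, hh, w, e⟩ := hshape i n
    have hYk : Y k = X (i, n) ^ p + h * X (i, n) + g + (p : MvPolynomial (Fin d × ℕ) A) * w := by
      rw [← e]; simp only [Y, hn, hi]
    rw [hYk] at hb
    have hsub : DeltaEnv.supp A i n ≤ MvPolynomial.supported A {u | u ≠ (i, n)} := by
      apply MvPolynomial.supported_mono
      rintro ⟨a, m⟩ ⟨_, hm⟩ h
      have : m = n := congrArg Prod.snd h
      simp only at hm
      omega
    refine DeltaEnv.monic_step p hp.two_le (i, n) _ _ rfl ?_ g h w b (hsub hg) (hsub hh) hb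
    rintro _ ⟨j, hj, rfl⟩
    have hj' : j < k := hj
    rcases hm : j / d with _ | m
    · refine ⟨- C (T ⟨j % d, Nat.mod_lt _ hd⟩), neg_mem (Subalgebra.algebraMap_mem _ _),
        X (⟨j % d, Nat.mod_lt _ hd⟩, 0), ?_⟩
      simp only [Y, hZ, hm, Function.iterate_zero, id]
      ring
    · obtain ⟨g', hg', h', hh', w', e'⟩ := hshape ⟨j % d, Nat.mod_lt _ hd⟩ m
      have hne : ∀ r ≤ m, ((⟨j % d, Nat.mod_lt _ hd⟩ : Fin d), r) ≠ (i, n) := by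
        intro r hr h
        have h1 : j % d = k % d := congrArg (fun s => (s.1 : ℕ)) h
        have h2 : r = n := congrArg Prod.snd h
        have h3 : j / d ≤ k / d := Nat.div_le_div_right hj'.le
        have h4 : j / d = k / d := by omega
        have h5 := Nat.div_add_mod j d
        have h6 := Nat.div_add_mod k d
        rw [h4, h1] at h5
        omega
      have hsub' : DeltaEnv.supp A ⟨j % d, Nat.mod_lt _ hd⟩ (m + 1) ≤
          MvPolynomial.supported A {u | u ≠ (i, n)} := by
        apply MvPolynomial.supported_mono
        rintro ⟨a, r⟩ ⟨ha, hr⟩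
        simp only at ha hr
        subst ha
        exact hne r (by omega)
      have hX := DeltaEnv.X_mem_supp (A := A) (⟨j % d, Nat.mod_lt _ hd⟩ : Fin d) m
      have hle := DeltaEnv.supp_le (A := A) (⟨j % d, Nat.mod_lt _ hd⟩ : Fin d) m
      refine ⟨_, hsub' (add_mem (add_mem (pow_mem hX p) (mul_mem (hle hh') hX)) (hle hg')), w', ?_⟩
      rw [← e']
      simp only [Y, hm]
end

section
/- Let p be a prime, A a δ-ring, and α, β ∈ A with δ(α) = α·β. Then there exists a unique δ-structure on E^α(A) = A[T]/(T²−αT) such that the canonical map ι : A → E^α(A) is a δ-homomorphism and δ(T) = β·T; this δ-structure is given explicitly by δ(x₀ + x₁T) = δ(x₀) + ((α^{p−1} + p·β)·δ(x₁) + β·x₁^p − ∑_{ν=1}^{p−1} (1/p)·C(p,ν)·x₀^{p−ν}·α^{ν−1}·x₁^ν)·T for x₀, x₁ ∈ A. -/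
/-- The ideal `(T² − α·T)` of `A[T]`. -/
noncomputable def twIdeal {A : Type*} [CommRing A] (α : A) : Ideal (Polynomial A) :=
  Ideal.span {Polynomial.X ^ 2 - Polynomial.C α * Polynomial.X}

/-- The twisted extension `E^α(A) = A[T]/(T² − α·T)`. -/
abbrev TwExt {A : Type*} [CommRing A] (α : A) : Type _ :=
  Polynomial A ⧸ twIdeal α

open Polynomial

/-- The carry polynomial `((x+y)^p - x^p - y^p)/p`. -/
def carryP (p : ℕ) {R : Type*} [CommRing R] (x y : R) : R :=
  ∑ i ∈ Finset.Ioo 0 p, ((p.choose i / p : ℕ) : R) * x ^ i * y ^ (p - i)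

theorem carryP_mul {p : ℕ} (hp : p.Prime) {R : Type*} [CommRing R] (x y : R) :
    (p : R) * carryP p x y = (x + y) ^ p - x ^ p - y ^ p := by
  have h1 : (x + y) ^ p = y ^ p + (∑ i ∈ Finset.Ioo 0 p,
      x ^ i * y ^ (p - i) * (p.choose i : R)) + x ^ p := by
    rw [add_pow, Finset.sum_range_succ, Finset.range_eq_Ico,
      Finset.sum_eq_sum_Ico_succ_bot hp.pos]
    have : Finset.Ico (0 + 1) p = Finset.Ioo 0 p := by ext i; simp; omega
    rw [this]; simp
  rw [h1, carryP, Finset.mul_sum]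
  have : ∑ i ∈ Finset.Ioo 0 p, (p : R) * (((p.choose i / p : ℕ) : R) * x ^ i * y ^ (p - i))
      = ∑ i ∈ Finset.Ioo 0 p, x ^ i * y ^ (p - i) * (p.choose i : R) := by
    refine Finset.sum_congr rfl fun i hi => ?_
    rw [Finset.mem_Ioo] at hi
    have hd : p * (p.choose i / p) = p.choose i :=
      Nat.mul_div_cancel' (hp.dvd_choose_self hi.1.ne' hi.2)
    have hd' : (p : R) * ((p.choose i / p : ℕ) : R) = (p.choose i : R) := by
      rw [← Nat.cast_mul, hd]
    rw [← hd']; ring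
  rw [this]; ring

theorem carryP_map {p : ℕ} {R S : Type*} [CommRing R] [CommRing S] (f : R →+* S) (x y : R) :
    f (carryP p x y) = carryP p (f x) (f y) := by
  simp [carryP, map_sum]

theorem carryP_zero_left {p : ℕ} {R : Type*} [CommRing R] (y : R) : carryP p 0 y = 0 := by
  refine Finset.sum_eq_zero fun i hi => ?_
  rw [Finset.mem_Ioo] at hi
  simp [hi.1.ne']

theorem carryP_mul_left {p : ℕ} {R : Type*} [CommRing R] (x y z : R) :
    carryP p (x * y) (x * z) = x ^ p * carryP p y z := by
  rw [carryP, carryP, Finset.mul_sum]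
  refine Finset.sum_congr rfl fun i hi => ?_
  rw [Finset.mem_Ioo] at hi
  have : x ^ p = x ^ i * x ^ (p - i) := by rw [← pow_add]; congr 1; omega
  rw [this, mul_pow, mul_pow]; ring

theorem carryP_comm {p : ℕ} (hp : p.Prime) {R : Type*} [CommRing R] (x y : R) :
    carryP p x y = carryP p y x := by
  have key : carryP p (MvPolynomial.X 0 : MvPolynomial (Fin 2) ℤ) (MvPolynomial.X 1) =
      carryP p (MvPolynomial.X 1) (MvPolynomial.X 0) := by
    have h0 : (p : MvPolynomial (Fin 2) ℤ) ≠ 0 := Nat.cast_ne_zero.2 hp.ne_zero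
    apply mul_left_cancel₀ h0
    rw [carryP_mul hp, carryP_mul hp]; ring
  have := congrArg (MvPolynomial.eval₂Hom (Int.castRingHom R) ![x, y]) key
  simp only [map_add, carryP_map, MvPolynomial.coe_eval₂Hom, MvPolynomial.eval₂_X,
    MvPolynomial.eval₂_add] at this
  simpa using this

theorem carryP_assoc {p : ℕ} (hp : p.Prime) {R : Type*} [CommRing R] (x y z : R) :
    carryP p x y + carryP p (x + y) z = carryP p y z + carryP p x (y + z) := by
  have key : carryP p (MvPolynomial.X 0 : MvPolynomial (Fin 3) ℤ) (MvPolynomial.X 1) +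
      carryP p (MvPolynomial.X 0 + MvPolynomial.X 1) (MvPolynomial.X 2) =
      carryP p (MvPolynomial.X 1) (MvPolynomial.X 2) +
      carryP p (MvPolynomial.X 0) (MvPolynomial.X 1 + MvPolynomial.X 2) := by
    have h0 : (p : MvPolynomial (Fin 3) ℤ) ≠ 0 := Nat.cast_ne_zero.2 hp.ne_zero
    apply mul_left_cancel₀ h0
    rw [mul_add, mul_add, carryP_mul hp, carryP_mul hp, carryP_mul hp, carryP_mul hp, add_assoc]
    ring
  have := congrArg (MvPolynomial.eval₂Hom (Int.castRingHom R) ![x, y, z]) key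
  simp only [map_add, carryP_map, MvPolynomial.coe_eval₂Hom, MvPolynomial.eval₂_X,
    MvPolynomial.eval₂_add] at this
  simpa using this

/-- Length two Witt vectors in δ-coordinates. -/
@[ext] structure WTwo (p : ℕ) (R : Type*) where
  a : R
  b : R

namespace WTwo
variable {p : ℕ} {R : Type*} [CommRing R]

instance : Zero (WTwo p R) := ⟨⟨0, 0⟩⟩
instance : One (WTwo p R) := ⟨⟨1, 0⟩⟩
instance : Add (WTwo p R) := ⟨fun x y => ⟨x.a + y.a, x.b + y.b - carryP p x.a y.a⟩⟩
instance : Neg (WTwo p R) := ⟨fun x => ⟨-x.a, -x.b + carryP p x.a (-x.a)⟩⟩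
instance : Mul (WTwo p R) :=
  ⟨fun x y => ⟨x.a * y.a, x.b * y.a ^ p + x.a ^ p * y.b + (p : R) * x.b * y.b⟩⟩

@[simp] theorem zero_a : (0 : WTwo p R).a = 0 := rfl
@[simp] theorem zero_b : (0 : WTwo p R).b = 0 := rfl
@[simp] theorem one_a : (1 : WTwo p R).a = 1 := rfl
@[simp] theorem one_b : (1 : WTwo p R).b = 0 := rfl
@[simp] theorem add_a (x y : WTwo p R) : (x + y).a = x.a + y.a := rfl
@[simp] theorem add_b (x y : WTwo p R) : (x + y).b = x.b + y.b - carryP p x.a y.a := rfl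
@[simp] theorem neg_a (x : WTwo p R) : (-x).a = -x.a := rfl
@[simp] theorem neg_b (x : WTwo p R) : (-x).b = -x.b + carryP p x.a (-x.a) := rfl
@[simp] theorem mul_a (x y : WTwo p R) : (x * y).a = x.a * y.a := rfl
@[simp] theorem mul_b (x y : WTwo p R) :
    (x * y).b = x.b * y.a ^ p + x.a ^ p * y.b + (p : R) * x.b * y.b := rfl

theorem add_comm' (hp : p.Prime) (x y : WTwo p R) : x + y = y + x := by
  ext
  · simp [add_comm]
  · simp [carryP_comm hp x.a y.a, add_comm]

theorem mul_comm' (x y : WTwo p R) : x * y = y * x := by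
  ext
  · simp [mul_comm]
  · simp only [mul_b]; ring

theorem zero_add' (x : WTwo p R) : 0 + x = x := by
  ext <;> simp [carryP_zero_left]

theorem left_distrib' (hp : p.Prime) (x y z : WTwo p R) : x * (y + z) = x * y + x * z := by
  ext
  · simp [mul_add]
  · simp only [mul_b, add_b, mul_a, add_a, carryP_mul_left]
    linear_combination (-x.b) * carryP_mul hp y.a z.a

theorem one_mul' (x : WTwo p R) : 1 * x = x := by
  ext <;> simp

instance [hp : Fact p.Prime] : CommRing (WTwo p R) where
  add_assoc x y z := by
    ext
    · simp [add_assoc]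
    · simp only [add_b, add_a]
      linear_combination - carryP_assoc hp.1 x.a y.a z.a
  zero_add := zero_add'
  add_zero x := by rw [add_comm' hp.1, zero_add']
  add_comm := add_comm' hp.1
  left_distrib := left_distrib' hp.1
  right_distrib x y z := by
    rw [mul_comm' _ z, left_distrib' hp.1, mul_comm' z x, mul_comm' z y]
  zero_mul x := by ext <;> simp [hp.1.ne_zero]
  mul_zero x := by ext <;> simp [hp.1.ne_zero]
  mul_assoc x y z := by
    ext
    · simp [mul_assoc]
    · simp only [mul_b, mul_a]; ring
  one_mul := one_mul'
  mul_one x := by rw [mul_comm', one_mul']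
  mul_comm := mul_comm'
  nsmul := nsmulRec
  zsmul := zsmulRec
  neg_add_cancel x := by
    rw [add_comm' hp.1]
    ext <;> simp

/-- The first component. -/
def fstHom [Fact p.Prime] : WTwo p R →+* R where
  toFun := WTwo.a
  map_zero' := rfl
  map_one' := rfl
  map_add' _ _ := rfl
  map_mul' _ _ := rfl

end WTwo

theorem twExt_X_sq {A : Type*} [CommRing A] (α : A) :
    (Ideal.Quotient.mk (twIdeal α) X) ^ 2 =
      Ideal.Quotient.mk (twIdeal α) (C α) * Ideal.Quotient.mk (twIdeal α) X := by
  rw [← map_pow, ← map_mul, Ideal.Quotient.eq]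
  exact Ideal.subset_span rfl

theorem twExt_X_pow {A : Type*} [CommRing A] (α : A) (n : ℕ) :
    (Ideal.Quotient.mk (twIdeal α) X) ^ (n + 1) =
      Ideal.Quotient.mk (twIdeal α) (C α) ^ n * Ideal.Quotient.mk (twIdeal α) X := by
  induction n with
  | zero => simp
  | succ n ih =>
    rw [pow_succ, ih, mul_assoc, ← pow_two, twExt_X_sq]; ring

theorem twExt_exists {A : Type*} [CommRing A] (α : A) (z : TwExt α) :
    ∃ x₀ x₁ : A, z = Ideal.Quotient.mk (twIdeal α) (C x₀ + C x₁ * X) := by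
  obtain ⟨f, rfl⟩ := Ideal.Quotient.mk_surjective z
  induction f using Polynomial.induction_on' with
  | add f g hf hg =>
    obtain ⟨a, b, h⟩ := hf
    obtain ⟨c, d, h'⟩ := hg
    refine ⟨a + c, b + d, ?_⟩
    rw [map_add, h, h', ← map_add]
    congr 1
    simp only [C_add]; ring
  | monomial n a =>
    rcases n with _ | n
    · exact ⟨a, 0, by simp⟩
    · refine ⟨0, a * α ^ n, ?_⟩
      rw [← C_mul_X_pow_eq_monomial, map_mul, map_pow, twExt_X_pow]
      simp [mul_assoc]

theorem twExt_formula (p : ℕ) (hp : p.Prime)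
    {A : Type*} [CommRing A] (DA : DeltaStructure p A) (α β : A)
    (DE : DeltaStructure p (TwExt α))
    (h1 : ∀ a : A, DE.δ (Ideal.Quotient.mk (twIdeal α) (C a)) =
          Ideal.Quotient.mk (twIdeal α) (C (DA.δ a)))
    (h2 : DE.δ (Ideal.Quotient.mk (twIdeal α) X) =
          Ideal.Quotient.mk (twIdeal α) (C β * X)) (x₀ x₁ : A) :
    DE.δ (Ideal.Quotient.mk (twIdeal α) (C x₀ + C x₁ * X)) =
          Ideal.Quotient.mk (twIdeal α) (C (DA.δ x₀) +
            C ((α ^ (p - 1) + (p : A) * β) * DA.δ x₁ + β * x₁ ^ p -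
              ∑ ν ∈ Finset.Ioo 0 p,
                ((p.choose ν / p : ℕ) : A) * x₀ ^ (p - ν) * α ^ (ν - 1) * x₁ ^ ν) * X) := by
  have hs : carryP p (Ideal.Quotient.mk (twIdeal α) (C x₁ * X))
      (Ideal.Quotient.mk (twIdeal α) (C x₀)) = Ideal.Quotient.mk (twIdeal α)
        (C (∑ ν ∈ Finset.Ioo 0 p,
          ((p.choose ν / p : ℕ) : A) * x₀ ^ (p - ν) * α ^ (ν - 1) * x₁ ^ ν) * X) := by
    rw [carryP, map_sum, Finset.sum_mul, map_sum]
    refine Finset.sum_congr rfl fun i hi => ?_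
    rw [Finset.mem_Ioo] at hi
    obtain ⟨k, rfl⟩ : ∃ k, i = k + 1 := ⟨i - 1, by omega⟩
    simp only [map_mul, mul_pow, twExt_X_pow, map_pow, map_natCast, Nat.add_sub_cancel]
    ring
  have hX : (Ideal.Quotient.mk (twIdeal α) X) ^ p =
      Ideal.Quotient.mk (twIdeal α) (C α) ^ (p - 1) * Ideal.Quotient.mk (twIdeal α) X := by
    rw [← twExt_X_pow, Nat.sub_add_cancel hp.pos]
  rw [add_comm (C x₀), map_add, DE.delta_add]
  change _ - carryP p _ _ = _
  rw [hs, map_mul, DE.delta_mul, h1, h1, h2, hX]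
  simp only [map_add, map_sub, map_mul, map_pow, map_natCast, sub_mul, add_mul]
  ring

/-- If `δ(α) = α·β` in a δ-ring `A`, there is a unique δ-structure on
`E^α(A) = A[T]/(T² − α·T)` such that `ι : A → E^α(A)` is a δ-homomorphism and
`δ(T) = β·T`; it is given explicitly by
`δ(x₀ + x₁T) = δ(x₀) + ((α^{p−1} + pβ)·δ(x₁) + β·x₁^p − ∑_{ν=1}^{p−1}
(1/p)·C(p,ν)·x₀^{p−ν}·α^{ν−1}·x₁^ν)·T`. -/
theorem delta_structure_twisted_extension (p : ℕ) (hp : p.Prime)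
    (A : Type*) [CommRing A] (DA : DeltaStructure p A)
    (α β : A) (hαβ : DA.δ α = α * β) :
    ∃ DE : DeltaStructure p (TwExt α),
      ((∀ a : A, DE.δ (Ideal.Quotient.mk (twIdeal α) (C a)) =
          Ideal.Quotient.mk (twIdeal α) (C (DA.δ a))) ∧
        DE.δ (Ideal.Quotient.mk (twIdeal α) X) =
          Ideal.Quotient.mk (twIdeal α) (C β * X)) ∧
      (∀ x₀ x₁ : A,
        DE.δ (Ideal.Quotient.mk (twIdeal α) (C x₀ + C x₁ * X)) =
          Ideal.Quotient.mk (twIdeal α) (C (DA.δ x₀) +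
            C ((α ^ (p - 1) + (p : A) * β) * DA.δ x₁ + β * x₁ ^ p -
              ∑ ν ∈ Finset.Ioo 0 p,
                ((p.choose ν / p : ℕ) : A) * x₀ ^ (p - ν) * α ^ (ν - 1) * x₁ ^ ν) * X)) ∧
      (∀ DE' : DeltaStructure p (TwExt α),
        ((∀ a : A, DE'.δ (Ideal.Quotient.mk (twIdeal α) (C a)) =
            Ideal.Quotient.mk (twIdeal α) (C (DA.δ a))) ∧
          DE'.δ (Ideal.Quotient.mk (twIdeal α) X) =
            Ideal.Quotient.mk (twIdeal α) (C β * X)) → DE' = DE) := by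
  have : Fact p.Prime := ⟨hp⟩
  set q := Ideal.Quotient.mk (twIdeal α) with hq
  let s : A →+* WTwo p (TwExt α) :=
    { toFun := fun a => ⟨q (C a), q (C (DA.δ a))⟩
      map_zero' := by ext <;> simp [DA.delta_zero]
      map_one' := by ext <;> simp [DA.delta_one]
      map_add' := fun x y => by
        ext
        · simp
        · have := carryP_map (p := p) (q.comp C) x y
          simp only [RingHom.comp_apply] at this
          simp only [WTwo.add_b, DA.delta_add, ← this]
          simp [carryP]
      map_mul' := fun x y => by
        ext
        · simp
        · simp [DA.delta_mul] }
  let F : A[X] →+* WTwo p (TwExt α) := eval₂RingHom s ⟨q X, q (C β * X)⟩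
  have hFC : ∀ a, F (C a) = ⟨q (C a), q (C (DA.δ a))⟩ := fun a => eval₂_C _ _
  have hFX : F X = ⟨q X, q (C β * X)⟩ := eval₂_X _ _
  have hF : ∀ f ∈ twIdeal α, F f = 0 := by
    have : twIdeal α ≤ RingHom.ker F := by
      refine Ideal.span_le.2 ?_
      rw [Set.singleton_subset_iff, SetLike.mem_coe, RingHom.mem_ker,
        map_sub, sub_eq_zero, map_mul, pow_two, map_mul, hFC, hFX, hαβ]
      obtain ⟨n, rfl⟩ : ∃ n, p = n + 1 := ⟨p - 1, (Nat.sub_add_cancel hp.pos).symm⟩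
      have h2 := twExt_X_sq α
      ext
      · simp only [WTwo.mul_a, ← hq] at h2 ⊢
        rw [← h2, pow_two]
      · simp only [WTwo.mul_b, map_mul, twExt_X_pow, ← hq] at h2 ⊢
        have h3 := twExt_X_pow α n
        simp only [← hq] at h3
        rw [h3]
        linear_combination (2 * q (C β) * q (C α) ^ n +
          ((n + 1 : ℕ) : TwExt α) * q (C β) ^ 2) * h2
    exact fun f hf => this hf
  let G : TwExt α →+* WTwo p (TwExt α) := Ideal.Quotient.lift (twIdeal α) F hF
  have hGq : ∀ f, G (q f) = F f := fun f => Ideal.Quotient.lift_mk _ _ _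
  have hG : ∀ z, (G z).a = z := by
    have : (WTwo.fstHom.comp F) = q := by
      apply Polynomial.ringHom_ext
      · intro a
        rw [RingHom.comp_apply, hFC]; rfl
      · rw [RingHom.comp_apply, hFX]; rfl
    intro z
    obtain ⟨f, rfl⟩ := Ideal.Quotient.mk_surjective z
    exact (congrArg WTwo.a (hGq f)).trans (RingHom.congr_fun this f)
  let DE : DeltaStructure p (TwExt α) :=
    { δ := fun z => (G z).b
      delta_zero := by simp
      delta_one := by simp
      delta_add := fun x y => by
        rw [map_add, WTwo.add_b, hG, hG]; rfl
      delta_mul := fun x y => by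
        rw [map_mul, WTwo.mul_b, hG, hG] }
  have e1 : ∀ a : A, DE.δ (q (C a)) = q (C (DA.δ a)) := fun a => by
    change (G (q (C a))).b = _
    rw [hGq, hFC]
  have e2 : DE.δ (q X) = q (C β * X) := by
    change (G (q X)).b = _
    rw [hGq, hFX]
  refine ⟨DE, ⟨e1, e2⟩, twExt_formula p hp DA α β DE e1 e2, ?_⟩
  rintro DE' ⟨e1', e2'⟩
  have : DE'.δ = DE.δ := by
    funext z
    obtain ⟨x₀, x₁, rfl⟩ := twExt_exists α z
    rw [twExt_formula p hp DA α β DE e1 e2, twExt_formula p hp DA α β DE' e1' e2']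
  cases DE'
  cases hDE : DE
  rw [hDE] at this
  simp only at this
  subst this
  rfl
end

section
/- Let p be a prime, R a δ-ring, A a δ-R-algebra, α, β ∈ A with δ(α)=αβ, ∂ an α-derivation of A over R, and let γ = id_A + α·∂ and φ(y) = y^p + p·δ(y). Say that x ∈ A is δ-compatible (with respect to ∂ and β) if ∂(δ(x)) = (α^{p−1}+p·β)·δ(∂(x)) + β·∂(x)^p − ∑_{ν=1}^{p−1} (1/p)·C(p,ν)·x^{p−ν}·α^{ν−1}·∂(x)^ν. Then: (1) if x is δ-compatible then γ(δ(x)) = δ(γ(x)), and the converse holds if α is a nonzerodivisor of A; (2) if x is δ-compatible then ∂(φ(x)) = (α^{p−1}+p·β)·φ(∂(x)), and the converse holds if A is p-torsion free. -/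
/-- An `α`-derivation of a commutative `R`-algebra `A` over `R`. -/
structure AlphaDerivation (R A : Type*) [CommRing R] [CommRing A] [Algebra R A]
    (α : A) where
  toFun : A → A
  map_add' : ∀ x y : A, toFun (x + y) = toFun x + toFun y
  map_smul' : ∀ (r : R) (x : A), toFun (r • x) = r • toFun x
  map_one' : toFun 1 = 0
  leibniz' : ∀ x y : A, toFun (x * y) =
    toFun x * y + x * toFun y + α * (toFun x * toFun y)

/-- `x` is δ-compatible with respect to the map `D` (an `α`-derivation) and `β`. -/
def DeltaCompatAt (p : ℕ) {A : Type*} [CommRing A] (DA : DeltaStructure p A)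
    (α β : A) (D : A → A) (x : A) : Prop :=
  D (DA.δ x) = (α ^ (p - 1) + (p : A) * β) * DA.δ (D x) + β * (D x) ^ p -
    ∑ ν ∈ Finset.Ioo 0 p,
      ((p.choose ν / p : ℕ) : A) * x ^ (p - ν) * α ^ (ν - 1) * (D x) ^ ν

theorem aux_pow {R A : Type*} [CommRing R] [CommRing A] [Algebra R A] {α : A}
    (D : AlphaDerivation R A α) (x : A) (n : ℕ) :
    D.toFun (x ^ n) = ∑ k ∈ Finset.range n,
      (n.choose (k + 1) : A) * x ^ (n - (k + 1)) * α ^ k * (D.toFun x) ^ (k + 1) := by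
  induction n with
  | zero => simp [D.map_one']
  | succ n ih =>
    rw [pow_succ, D.leibniz']
    have h1 : ∑ k ∈ Finset.range (n + 1), ((n + 1).choose (k + 1) : A) *
        x ^ (n + 1 - (k + 1)) * α ^ k * (D.toFun x) ^ (k + 1) =
        (∑ k ∈ Finset.range (n + 1), (n.choose k : A) *
          x ^ (n - k) * α ^ k * (D.toFun x) ^ (k + 1)) +
        ∑ k ∈ Finset.range (n + 1), (n.choose (k + 1) : A) *
          x ^ (n - k) * α ^ k * (D.toFun x) ^ (k + 1) := by
      rw [← Finset.sum_add_distrib]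
      refine Finset.sum_congr rfl fun k _ => ?_
      rw [Nat.choose_succ_succ, Nat.add_sub_add_right]
      push_cast
      ring
    have h2 : ∑ k ∈ Finset.range (n + 1), (n.choose k : A) *
          x ^ (n - k) * α ^ k * (D.toFun x) ^ (k + 1) =
        α * (D.toFun (x ^ n) * D.toFun x) + x ^ n * D.toFun x := by
      rw [Finset.sum_range_succ', ih, Finset.sum_mul, Finset.mul_sum]
      congr 1
      · refine Finset.sum_congr rfl fun k _ => ?_
        ring
      · simp
    have h3 : ∑ k ∈ Finset.range (n + 1), (n.choose (k + 1) : A) *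
          x ^ (n - k) * α ^ k * (D.toFun x) ^ (k + 1) = D.toFun (x ^ n) * x := by
      rw [Finset.sum_range_succ, ih, Finset.sum_mul]
      simp only [Nat.choose_succ_self, Nat.cast_zero, zero_mul, add_zero]
      refine Finset.sum_congr rfl fun k hk => ?_
      have hk' : n - k = n - (k + 1) + 1 := by
        have := Finset.mem_range.1 hk
        omega
      rw [hk']
      ring
    rw [h1, h2, h3]
    ring

theorem aux_pow_prime {p : ℕ} (hp : p.Prime) {R A : Type*} [CommRing R] [CommRing A]
    [Algebra R A] {α : A} (D : AlphaDerivation R A α) (x : A) :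
    D.toFun (x ^ p) = α ^ (p - 1) * (D.toFun x) ^ p + (p : A) * ∑ ν ∈ Finset.Ioo 0 p,
      ((p.choose ν / p : ℕ) : A) * x ^ (p - ν) * α ^ (ν - 1) * (D.toFun x) ^ ν := by
  obtain ⟨q, rfl⟩ : ∃ q, p = q + 1 := ⟨p - 1, by have := hp.pos; omega⟩
  have hI : Finset.Ioo 0 (q + 1) = Finset.Ico (0 + 1) (q + 1) := by
    ext; simp; omega
  rw [aux_pow, Finset.sum_range_succ, hI, ← Finset.sum_Ico_add', Finset.mul_sum, add_comm,
    ← Finset.range_eq_Ico]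
  congr 1
  · simp
  · refine Finset.sum_congr rfl fun k hk => ?_
    have hd : (q + 1) ∣ (q + 1).choose (k + 1) :=
      hp.dvd_choose_self (by omega) (by have := Finset.mem_range.1 hk; omega)
    have hc : ((q + 1).choose (k + 1) : A) =
        ((q + 1 : ℕ) : A) * (((q + 1).choose (k + 1) / (q + 1) : ℕ) : A) := by
      rw [← Nat.cast_mul, Nat.mul_div_cancel' hd]
    rw [hc, Nat.add_sub_cancel]
    ring

theorem aux_natCast {R A : Type*} [CommRing R] [CommRing A] [Algebra R A] {α : A}
    (D : AlphaDerivation R A α) (n : ℕ) (x : A) :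
    D.toFun ((n : A) * x) = (n : A) * D.toFun x := by
  have := D.map_smul' (n : R) x
  simpa [Algebra.smul_def] using this

theorem aux_delta {p : ℕ} (hp : p.Prime) {A : Type*} [CommRing A] (DA : DeltaStructure p A)
    (α β : A) (hαβ : DA.δ α = α * β) (x d : A) :
    DA.δ (x + α * d) = DA.δ x + α * ((α ^ (p - 1) + (p : A) * β) * DA.δ d + β * d ^ p -
      ∑ ν ∈ Finset.Ioo 0 p,
        ((p.choose ν / p : ℕ) : A) * x ^ (p - ν) * α ^ (ν - 1) * d ^ ν) := by
  have hs : ∑ i ∈ Finset.Ioo 0 p, ((p.choose i / p : ℕ) : A) * x ^ i * (α * d) ^ (p - i) =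
      α * ∑ ν ∈ Finset.Ioo 0 p,
        ((p.choose ν / p : ℕ) : A) * x ^ (p - ν) * α ^ (ν - 1) * d ^ ν := by
    rw [Finset.mul_sum]
    refine Finset.sum_bij' (fun i _ => p - i) (fun i _ => p - i) ?_ ?_ ?_ ?_ ?_
    · intro i hi
      simp only [Finset.mem_Ioo] at hi ⊢
      omega
    · intro i hi
      simp only [Finset.mem_Ioo] at hi ⊢
      omega
    · intro i hi
      simp only [Finset.mem_Ioo] at hi
      omega
    · intro i hi
      simp only [Finset.mem_Ioo] at hi
      omega
    · intro i hi
      simp only [Finset.mem_Ioo] at hi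
      rw [Nat.choose_symm hi.2.le, Nat.sub_sub_self hi.2.le]
      obtain ⟨m, hm⟩ : ∃ m, p - i = m + 1 := ⟨p - i - 1, by omega⟩
      rw [hm, Nat.add_sub_cancel]
      ring
  have hpow : α ^ p = α * α ^ (p - 1) := by
    rw [← pow_succ', Nat.sub_add_cancel hp.one_le]
  rw [DA.delta_add, DA.delta_mul, hs, hαβ, hpow]
  ring

/-- With `γ = id + α·∂` and `φ(y) = y^p + p·δ(y)`:
(1) δ-compatibility of `x` implies `γ(δ(x)) = δ(γ(x))`, with converse when `α` is a
nonzerodivisor; (2) δ-compatibility of `x` implies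
`∂(φ(x)) = (α^{p−1} + pβ)·φ(∂(x))`, with converse when `A` is `p`-torsion free. -/
theorem deltaCompat_iff (p : ℕ) (hp : p.Prime) (R A : Type*) [CommRing R] [CommRing A]
    [Algebra R A] (DR : DeltaStructure p R) (DA : DeltaStructure p A)
    (halg : ∀ r : R, DA.δ (algebraMap R A r) = algebraMap R A (DR.δ r))
    (α β : A) (hαβ : DA.δ α = α * β)
    (D : AlphaDerivation R A α) (x : A) :
    (DeltaCompatAt p DA α β D.toFun x →
      DA.δ x + α * D.toFun (DA.δ x) = DA.δ (x + α * D.toFun x)) ∧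
    ((∀ y : A, α * y = 0 → y = 0) →
      DA.δ x + α * D.toFun (DA.δ x) = DA.δ (x + α * D.toFun x) →
      DeltaCompatAt p DA α β D.toFun x) ∧
    (DeltaCompatAt p DA α β D.toFun x →
      D.toFun (x ^ p + (p : A) * DA.δ x) =
        (α ^ (p - 1) + (p : A) * β) * ((D.toFun x) ^ p + (p : A) * DA.δ (D.toFun x))) ∧
    ((∀ y : A, (p : A) * y = 0 → y = 0) →
      D.toFun (x ^ p + (p : A) * DA.δ x) =
        (α ^ (p - 1) + (p : A) * β) * ((D.toFun x) ^ p + (p : A) * DA.δ (D.toFun x)) →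
      DeltaCompatAt p DA α β D.toFun x) := by
  have h1 := aux_delta hp DA α β hαβ x (D.toFun x)
  have h2 : D.toFun (x ^ p + (p : A) * DA.δ x) = _ := D.map_add' _ _
  rw [aux_natCast, aux_pow_prime hp] at h2
  unfold DeltaCompatAt
  rw [h1, h2]
  refine ⟨fun h => by rw [h], fun hα h => ?_, fun h => by rw [h]; ring, fun hP h => ?_⟩
  · refine sub_eq_zero.1 (hα _ ?_)
    linear_combination h
  · refine sub_eq_zero.1 (hP _ ?_)
    linear_combination h
end
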